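/- arXiv:1112.1815 — 2 statements merged into one kernel-verified Lean document; each statement's English description precedes it below -/
import Mathlib

section
/- Assume the setup below. Then ∫₀¹ I(Ξ(λ*(1−t))) dt = −(2/λ*) ∫₀^{λ*} Λ(θ) dθ; that is, the rate-function cost ∫₀¹ I(ψ*'(t)) dt of the path ψ* equals −(2/λ*) ∫₀^{λ*} Λ(θ) dθ. -/
open MeasureTheory Set Filter

theorem tangent_aux (I : ℝ → ℝ) (hc : ConvexOn ℝ Set.univ I) (hd : Differentiable ℝ I) (x y : ℝ) :
    I x + deriv I x * (y - x) ≤ I y := by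
  rcases lt_trichotomy x y with h | h | h
  · have := hc.deriv_le_slope (Set.mem_univ x) (Set.mem_univ y) h (hd x)
    rw [slope_def_field, le_div_iff₀ (by linarith)] at this
    linarith
  · subst h; simp
  · have := hc.slope_le_deriv (Set.mem_univ y) (Set.mem_univ x) h (hd x)
    rw [slope_def_field, div_le_iff₀ (by linarith)] at this
    linarith

/-- The rate-function cost of the path `ψ*`:
`∫₀¹ I(ψ*'(t)) dt = ∫₀¹ I(Ξ(λ*(1−t))) dt = −(2/λ*) ∫₀^{λ*} Λ(θ) dθ`. -/
theorem psi_star_cost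
    (δ xstar lstar : ℝ) (I Ξ : ℝ → ℝ)
    (hδ : 0 < δ)
    (hconv : StrictConvexOn ℝ Set.univ I)
    (hC1 : ContDiff ℝ 1 I)
    (hImin : I (-δ) = 0)
    (hIpos : ∀ x : ℝ, x ≠ -δ → 0 < I x)
    (hderivδ : deriv I (-δ) = 0)
    (hxpos : 0 < xstar)
    (hxmin : ∀ x : ℝ, 0 < x → I xstar / xstar ≤ I x / x)
    (hlamdef : lstar = deriv I xstar)
    (hlamalt : lstar = I xstar / xstar)
    (hlampos : 0 < lstar)
    (hΞinvL : ∀ x ∈ Set.Icc (-δ) xstar, Ξ (deriv I x) = x)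
    (hΞinvR : ∀ r ∈ Set.Icc (0:ℝ) lstar, deriv I (Ξ r) = r)
    (hΞmaps : ∀ r ∈ Set.Icc (0:ℝ) lstar, Ξ r ∈ Set.Icc (-δ) xstar)
    (hΞcont : ContinuousOn Ξ (Set.Icc 0 lstar))
    (hΞmono : StrictMonoOn Ξ (Set.Icc 0 lstar))
    (hΞzero : Ξ 0 = -δ)
    (hΞlstar : Ξ lstar = xstar)
    (Λ : ℝ → ℝ)
    (hΛ : ∀ θ ∈ Set.Icc (0:ℝ) lstar, Λ θ = θ * Ξ θ - I (Ξ θ)) :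
    (∫ t in (0:ℝ)..1, I (Ξ (lstar * (1 - t)))) = -(2 / lstar) * ∫ θ in (0:ℝ)..lstar, Λ θ := by
  have hd : Differentiable ℝ I := hC1.differentiable (by norm_num)
  have htan := tangent_aux I hconv.convexOn hd
  set G : ℝ → ℝ := fun θ => θ * Ξ θ - I (Ξ θ) with hG
  have hIc : ContinuousOn (fun θ => I (Ξ θ)) (Set.Icc 0 lstar) :=
    hd.continuous.comp_continuousOn hΞcont
  have hBc : ContinuousOn (fun θ => θ * Ξ θ) (Set.Icc 0 lstar) := continuousOn_id.mul hΞcont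
  have hGc : ContinuousOn G (Set.Icc 0 lstar) := hBc.sub hIc
  have hGd : ∀ θ ∈ Set.Ioo 0 lstar, HasDerivAt G (Ξ θ) θ := by
    intro θ hθ
    have hθ' : θ ∈ Set.Icc 0 lstar := Set.Ioo_subset_Icc_self hθ
    have hnh : Set.Icc 0 lstar ∈ nhds θ := Icc_mem_nhds hθ.1 hθ.2
    have hca : ContinuousAt Ξ θ := hΞcont.continuousAt hnh
    rw [hasDerivAt_iff_isLittleO, Asymptotics.isLittleO_iff]
    intro c hc
    have h1 := Metric.tendsto_nhds.1 hca c hc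
    filter_upwards [h1, hnh] with r hr hrm
    have e1 := htan (Ξ θ) (Ξ r)
    have e2 := htan (Ξ r) (Ξ θ)
    rw [hΞinvR θ hθ'] at e1
    rw [hΞinvR r hrm] at e2
    have hlow : 0 ≤ G r - G θ - (r - θ) * Ξ θ := by simp only [hG]; linarith
    have hup : G r - G θ - (r - θ) * Ξ θ ≤ (r - θ) * (Ξ r - Ξ θ) := by simp only [hG]; linarith
    rw [Real.dist_eq] at hr
    rw [smul_eq_mul, Real.norm_eq_abs, Real.norm_eq_abs, abs_of_nonneg hlow]
    calc _ ≤ (r - θ) * (Ξ r - Ξ θ) := hup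
      _ ≤ |(r - θ) * (Ξ r - Ξ θ)| := le_abs_self _
      _ = |Ξ r - Ξ θ| * |r - θ| := by rw [abs_mul, mul_comm]
      _ ≤ c * |r - θ| := by gcongr
  have hii : ∀ f : ℝ → ℝ, ContinuousOn f (Set.Icc 0 lstar) →
      IntervalIntegrable f volume 0 lstar := fun f hf =>
    ContinuousOn.intervalIntegrable_of_Icc hlampos.le hf
  have key := intervalIntegral.integral_eq_sub_of_hasDerivAt_of_le hlampos.le
    (f := fun θ => θ * G θ) (f' := fun θ => G θ + θ * Ξ θ) (continuousOn_id.mul hGc)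
    (fun θ hθ => by
      have h := (hasDerivAt_id θ).mul (hGd θ hθ)
      simp only [id, one_mul] at h
      exact h)
    ((hii _ hGc).add (hii _ hBc))
  have hGl : G lstar = 0 := by
    simp only [hG, hΞlstar]
    rw [hlamalt]; field_simp; ring
  rw [intervalIntegral.integral_add (hii _ hGc) (hii _ hBc), hGl] at key
  have hGs : ∫ θ in (0:ℝ)..lstar, G θ =
      (∫ θ in (0:ℝ)..lstar, θ * Ξ θ) - ∫ θ in (0:ℝ)..lstar, I (Ξ θ) :=
    intervalIntegral.integral_sub (hii _ hBc) (hii _ hIc)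
  have hΛG : ∫ θ in (0:ℝ)..lstar, Λ θ = ∫ θ in (0:ℝ)..lstar, G θ := by
    apply intervalIntegral.integral_congr
    intro θ hθ
    rw [Set.uIcc_of_le hlampos.le] at hθ
    exact hΛ θ hθ
  have hL : (∫ t in (0:ℝ)..1, I (Ξ (lstar * (1 - t)))) =
      lstar⁻¹ * ∫ θ in (0:ℝ)..lstar, I (Ξ θ) := by
    have h1 := intervalIntegral.integral_comp_sub_left
      (a := 0) (b := 1) (fun t => I (Ξ (lstar * t))) 1
    have h2 := intervalIntegral.integral_comp_mul_left
      (a := 0) (b := 1) (fun t => I (Ξ t)) hlampos.ne'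
    simp only [sub_self, sub_zero, mul_zero, mul_one, smul_eq_mul] at h1 h2
    rw [h1, h2]
  rw [hL, hΛG]
  have : ∫ θ in (0:ℝ)..lstar, I (Ξ θ) = -2 * ∫ θ in (0:ℝ)..lstar, G θ := by linarith
  rw [this]; ring
end

section
/- Assume the setup below, define K = 2·√(−∫₀^{λ*} Λ(θ) dθ), fix b > 0, set a = 2λ*√b / K, and define the rescaled path ψ*_b(t) = a·ψ*(t/a) for t ∈ [0, a]. Then: (i) ψ*_b(a) = 0; (ii) ∫₀^a ψ*_b(t) dt = b; and (iii) ∫₀^a I((ψ*_b)'(t)) dt = K·√b. In particular the large-deviations cost of the most likely path sweeping area b is K√b. -/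
open MeasureTheory Set Filter

lemma aux_tangent (I : ℝ → ℝ) (hconv : ConvexOn ℝ Set.univ I) (hd : Differentiable ℝ I) (x y : ℝ) :
    I x + deriv I x * (y - x) ≤ I y := by
  rcases lt_trichotomy x y with h | h | h
  · have := hconv.deriv_le_slope (mem_univ x) (mem_univ y) h (hd x)
    rw [slope_def_field, le_div_iff₀ (by linarith)] at this
    linarith
  · subst h; simp
  · have := hconv.slope_le_deriv (mem_univ y) (mem_univ x) h (hd x)
    rw [slope_def_field, div_le_iff₀ (by linarith)] at this
    linarith

lemma aux_deriv (G Ξ : ℝ → ℝ) (L : ℝ) (hc : ContinuousOn Ξ (Icc 0 L))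
    (h : ∀ x ∈ Icc 0 L, ∀ y ∈ Icc 0 L, G x + Ξ x * (y - x) ≤ G y) :
    ∀ x ∈ Ioo 0 L, HasDerivAt G (Ξ x) x := by
  intro x hx
  have hn : Icc 0 L ∈ nhds x := Icc_mem_nhds hx.1 hx.2
  have hcx : ContinuousAt Ξ x := hc.continuousAt hn
  rw [hasDerivAt_iff_isLittleO]
  have h1 : (fun y => Ξ y - Ξ x) =o[nhds x] (fun _ => (1:ℝ)) := by
    rw [Asymptotics.isLittleO_one_iff]
    have := hcx.tendsto.sub_const (Ξ x)
    simpa using this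
  have h2 := h1.mul_isBigO (Asymptotics.isBigO_refl (fun y => y - x) (nhds x))
  simp only [one_mul] at h2
  refine Asymptotics.IsBigO.trans_isLittleO ?_ h2
  refine Asymptotics.IsBigO.of_bound 1 ?_
  filter_upwards [hn] with y hy
  have a1 := h x ⟨hx.1.le, hx.2.le⟩ y hy
  have a2 := h y hy x ⟨hx.1.le, hx.2.le⟩
  rw [one_mul, Real.norm_eq_abs, Real.norm_eq_abs, smul_eq_mul]
  rw [abs_of_nonneg (by nlinarith)]
  refine le_trans ?_ (le_abs_self _)
  nlinarith

/-- For the rescaled path `ψ*_b(t) = a ψ*(t/a)` with `a = 2 λ* √b / K`: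
it returns to zero at `a`, sweeps area exactly `b`, and its large-deviations cost is
`K √b`. -/
theorem rescaled_path_properties
    (δ xstar lstar : ℝ) (I Ξ : ℝ → ℝ)
    (hδ : 0 < δ)
    (hconv : StrictConvexOn ℝ Set.univ I)
    (hC1 : ContDiff ℝ 1 I)
    (hImin : I (-δ) = 0)
    (hIpos : ∀ x : ℝ, x ≠ -δ → 0 < I x)
    (hderivδ : deriv I (-δ) = 0)
    (hxpos : 0 < xstar)
    (hxmin : ∀ x : ℝ, 0 < x → I xstar / xstar ≤ I x / x)
    (hlamdef : lstar = deriv I xstar)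
    (hlamalt : lstar = I xstar / xstar)
    (hlampos : 0 < lstar)
    (hΞinvL : ∀ x ∈ Set.Icc (-δ) xstar, Ξ (deriv I x) = x)
    (hΞinvR : ∀ r ∈ Set.Icc (0:ℝ) lstar, deriv I (Ξ r) = r)
    (hΞmaps : ∀ r ∈ Set.Icc (0:ℝ) lstar, Ξ r ∈ Set.Icc (-δ) xstar)
    (hΞcont : ContinuousOn Ξ (Set.Icc 0 lstar))
    (hΞmono : StrictMonoOn Ξ (Set.Icc 0 lstar))
    (hΞzero : Ξ 0 = -δ)
    (hΞlstar : Ξ lstar = xstar)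
    (ψ : ℝ → ℝ)
    (hψ : ∀ t : ℝ, ψ t = ∫ s in (0:ℝ)..t, Ξ (lstar * (1 - s)))
    (Λ : ℝ → ℝ)
    (hΛ : ∀ θ ∈ Set.Icc (0:ℝ) lstar, Λ θ = θ * Ξ θ - I (Ξ θ))
    (K b a : ℝ)
    (hK : K = 2 * Real.sqrt (-∫ θ in (0:ℝ)..lstar, Λ θ))
    (hb : 0 < b)
    (ha : a = 2 * lstar * Real.sqrt b / K)
    (ψb : ℝ → ℝ)
    (hψb : ∀ t : ℝ, ψb t = a * ψ (t / a)) :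
    ψb a = 0 ∧
    (∫ t in (0:ℝ)..a, ψb t) = b ∧
    (∫ t in (0:ℝ)..a, I (Ξ (lstar * (1 - t / a)))) = K * Real.sqrt b := by
  have hd : Differentiable ℝ I := hC1.differentiable (by norm_num)
  have hIc : Continuous I := hC1.continuous
  obtain ⟨G, hG⟩ : ∃ G : ℝ → ℝ, G = fun θ => θ * Ξ θ - I (Ξ θ) := ⟨_, rfl⟩
  have hGc : ContinuousOn G (Icc 0 lstar) := by
    rw [hG]
    exact (continuousOn_id.mul hΞcont).sub (hIc.comp_continuousOn hΞcont)
  have hGt : ∀ x ∈ Icc 0 lstar, ∀ y ∈ Icc 0 lstar, G x + Ξ x * (y - x) ≤ G y := by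
    intro x hx y hy
    have := aux_tangent I hconv.convexOn hd (Ξ y) (Ξ x)
    rw [hΞinvR y hy] at this
    simp only [hG]
    nlinarith
  have hGd := aux_deriv G Ξ lstar hΞcont hGt
  have hG0 : G 0 = 0 := by simp [hG, hΞzero, hImin]
  have hGL : G lstar = 0 := by
    simp only [hG, hΞlstar]
    rw [hlamalt]; field_simp; ring
  have hGneg : ∀ θ ∈ Ioo 0 lstar, G θ < 0 := by
    intro θ hθ
    have hm : -δ < Ξ θ := by
      rw [← hΞzero]
      exact hΞmono ⟨le_rfl, hlampos.le⟩ ⟨hθ.1.le, hθ.2.le⟩ hθ.1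
    simp only [hG]
    rcases le_or_gt (Ξ θ) 0 with h | h
    · have := hIpos _ hm.ne'
      nlinarith [hθ.1]
    · have := hxmin _ h
      rw [← hlamalt, le_div_iff₀ h] at this
      nlinarith [hθ.2]
  have hΛG : (∫ θ in (0:ℝ)..lstar, Λ θ) = ∫ θ in (0:ℝ)..lstar, G θ := by
    apply intervalIntegral.integral_congr
    intro θ hθ
    rw [uIcc_of_le hlampos.le] at hθ
    simp only [hΛ θ hθ, hG]
  have hGi : IntervalIntegrable G volume 0 lstar :=
    hGc.intervalIntegrable_of_Icc hlampos.le
  have hΞi : IntervalIntegrable Ξ volume 0 lstar :=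
    hΞcont.intervalIntegrable_of_Icc hlampos.le
  obtain ⟨J, hJ⟩ : ∃ J, J = -∫ θ in (0:ℝ)..lstar, G θ := ⟨_, rfl⟩
  have hJpos : 0 < J := by
    rw [hJ, ← intervalIntegral.integral_neg]
    apply intervalIntegral.intervalIntegral_pos_of_pos_on hGi.neg _ hlampos
    intro x hx
    simpa using hGneg x hx
  rw [hΛG, ← hJ] at hK
  have hsJ : 0 < Real.sqrt J := Real.sqrt_pos.2 hJpos
  have hsb : 0 < Real.sqrt b := Real.sqrt_pos.2 hb
  have hJJ : Real.sqrt J * Real.sqrt J = J := Real.mul_self_sqrt hJpos.le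
  have hbb : Real.sqrt b * Real.sqrt b = b := Real.mul_self_sqrt hb.le
  have haJ : a * Real.sqrt J = lstar * Real.sqrt b := by
    rw [ha, hK]; field_simp
  have hapos : 0 < a := by rw [ha, hK]; positivity
  have hLne := hlampos.ne'
  have hane := hapos.ne'
  -- scaling
  have hscale : ∀ f : ℝ → ℝ, ∀ t : ℝ, (∫ s in (0:ℝ)..t, f (lstar * (1 - s))) =
      lstar⁻¹ * ∫ s in (lstar * (1 - t))..lstar, f s := by
    intro f t
    have := intervalIntegral.integral_comp_sub_mul (a := 0) (b := t) f hLne lstar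
    simp only [smul_eq_mul, mul_zero, sub_zero] at this
    simp only [mul_sub, mul_one]
    exact this
  have hscale2 : ∀ f : ℝ → ℝ, (∫ t in (0:ℝ)..a, f (t / a)) = a * ∫ s in (0:ℝ)..1, f s := by
    intro f
    have := intervalIntegral.integral_comp_div (a := 0) (b := a) f hane
    simpa [div_self hane] using this
  have hψG : ∀ t ∈ Icc (0:ℝ) 1, ψ t = -(lstar⁻¹) * G (lstar * (1 - t)) := by
    intro t ht
    rw [hψ, hscale]
    have h0 : 0 ≤ lstar * (1 - t) := mul_nonneg hlampos.le (by linarith [ht.2])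
    have h1 : lstar * (1 - t) ≤ lstar := by nlinarith [ht.1]
    have hsub : Icc (lstar * (1 - t)) lstar ⊆ Icc 0 lstar := Icc_subset_Icc_left h0
    rw [intervalIntegral.integral_eq_sub_of_hasDerivAt_of_le h1 (hGc.mono hsub)
      (fun x hx => hGd x ⟨lt_of_le_of_lt h0 hx.1, hx.2⟩)
      ((hΞcont.mono hsub).intervalIntegrable_of_Icc h1), hGL]
    ring
  refine ⟨?_, ?_, ?_⟩
  · rw [hψb, div_self hane, hψG 1 (by simp)]
    simp [hG0]
  · simp only [hψb]
    rw [intervalIntegral.integral_const_mul, hscale2]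
    have : (∫ s in (0:ℝ)..1, ψ s) = ∫ s in (0:ℝ)..1, -(lstar⁻¹) * G (lstar * (1 - s)) := by
      apply intervalIntegral.integral_congr
      intro t ht
      rw [uIcc_of_le zero_le_one] at ht
      exact hψG t ht
    rw [this, intervalIntegral.integral_const_mul, hscale G]
    simp only [sub_self, mul_zero]
    have hJ' : (∫ θ in (0:ℝ)..lstar, G θ) = -J := by linarith
    rw [hJ']
    field_simp
    calc a ^ 2 * J = (a * Real.sqrt J) * (a * Real.sqrt J) := by linear_combination (-a^2) * hJJ
      _ = _ := by rw [haJ]; linear_combination lstar^2 * hbb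
  · rw [hscale2 (fun u => I (Ξ (lstar * (1 - u)))), hscale (fun u => I (Ξ u))]
    simp only [sub_self, mul_zero]
    have hparts : (∫ θ in (0:ℝ)..lstar, (G θ + θ * Ξ θ)) = lstar * G lstar - 0 * G 0 := by
      apply intervalIntegral.integral_eq_sub_of_hasDerivAt_of_le (f := fun θ => θ * G θ) hlampos.le
        (continuousOn_id.mul hGc)
      · intro x hx
        have h3 := (hasDerivAt_id x).mul (hGd x hx)
        simp only [id, one_mul] at h3
        exact h3
      · exact (hGc.add (continuousOn_id.mul hΞcont)).intervalIntegrable_of_Icc hlampos.le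
    have hii : IntervalIntegrable (fun θ => G θ + θ * Ξ θ) volume 0 lstar :=
      (hGc.add (continuousOn_id.mul hΞcont)).intervalIntegrable_of_Icc hlampos.le
    have hI : (∫ θ in (0:ℝ)..lstar, I (Ξ θ)) = ∫ θ in (0:ℝ)..lstar, ((G θ + θ * Ξ θ) - 2 * G θ) := by
      congr 1; ext θ; simp only [hG]; ring
    rw [hI, intervalIntegral.integral_sub hii
      (hGi.const_mul 2), hparts, intervalIntegral.integral_const_mul, hGL]
    have hJ' : (∫ θ in (0:ℝ)..lstar, G θ) = -J := by linarith
    rw [hJ', hK]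
    have : a * J = lstar * Real.sqrt b * Real.sqrt J := by rw [← haJ, mul_assoc, hJJ]
    field_simp
    linarith
end
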